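/- Let n, t, d ∈ ℕ with t ≥ 1 and d ≤ n − 1, and let Σ be an n×n positive semidefinite real matrix with eigenvalues λ₁ ≤ … ≤ λₙ. Then there exists a set S ⊆ [n] with |S| ≤ (7t)^{2t+1}·d such that for every t-sparse v ∈ ℝⁿ, √(λ_{d+1})·‖v_{[n]∖S}‖₂ ≤ 3·‖v‖_Σ. -/

import Mathlib

open Matrix MeasureTheory ProbabilityTheory
open scoped BigOperators ENNReal

noncomputable section

/-- `v` has at most `t` nonzero coordinates. -/
def SparseVec {k : ℕ} (t : ℕ) (v : Fin k → ℝ) : Prop := {i | v i ≠ 0}.ncard ≤ t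

/-- ⟨x,y⟩_Σ := xᵀ Σ y. -/
def innerSigma {k : ℕ} (A : Matrix (Fin k) (Fin k) ℝ) (x y : Fin k → ℝ) : ℝ := x ⬝ᵥ (A *ᵥ y)

/-- ‖x‖_Σ := √(xᵀ Σ x). -/
def normSigma {k : ℕ} (A : Matrix (Fin k) (Fin k) ℝ) (x : Fin k → ℝ) : ℝ :=
  Real.sqrt (innerSigma A x x)

/-- Euclidean norm on ℝ^k. -/
def l2norm {k : ℕ} (v : Fin k → ℝ) : ℝ := Real.sqrt (∑ i, v i ^ 2)

/-- ℓ1 norm on ℝ^k. -/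
def l1norm {k : ℕ} (v : Fin k → ℝ) : ℝ := ∑ i, |v i|

/-- restriction of `v` to coordinates outside `S` (zero on `S`). -/
def restrictOut {k : ℕ} (S : Finset (Fin k)) (v : Fin k → ℝ) : Fin k → ℝ :=
  fun i => if i ∈ S then 0 else v i

/-!
Let `V` be spanned by the eigenvectors of the `d` smallest eigenvalues, so that
`λ_{d+1} ‖P_{Vᗮ} v‖² ≤ ‖v‖_Σ²`. It suffices to find a small `S` such that the part of a `t`-sparse
`v` outside `S` is controlled by the distance from `v` to `V`.

For a subspace `U`, the numbers `‖P_U eᵢ‖²` add up to `dim U`, so few of them exceed a threshold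
`θ`. Peeling starts from `∅` and repeatedly replaces `S` by the set of `i` for which
`‖P_{V + span (e_S)} eᵢ‖² ≥ θ`; the sets increase, and each step multiplies the bound on
`dim V + |S|` by `1 + θ⁻¹`. The support of `v` has at most `t` elements, so one of the first `t + 1`
steps adds none of them. At such a step, with `U = V + span (e_S)`, every `eᵢ` in the support of `v`
outside `S` is nearly orthogonal to `U`. By Cauchy–Schwarz so is the part `y` of `v` outside `S`, as
`θ` is of order `1 / t`; hence `‖y‖` is comparable to `‖P_{Uᗮ} y‖ = ‖P_{Uᗮ} v‖ ≤ ‖P_{Vᗮ} v‖`.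
-/

section Projection

open Finset Module

variable {𝕜 E ι : Type*} [RCLike 𝕜] [NormedAddCommGroup E] [InnerProductSpace 𝕜 E]

lemma norm_starProjection_le_of_le {U V : Submodule 𝕜 E} [U.HasOrthogonalProjection]
    [V.HasOrthogonalProjection] (h : U ≤ V) (x : E) :
    ‖U.starProjection x‖ ≤ ‖V.starProjection x‖ := by
  rw [← Submodule.starProjection_comp_starProjection_of_le h, ContinuousLinearMap.comp_apply]
  exact U.norm_starProjection_apply_le _

lemma sq_norm_sum_smul_le {F : Type*} [SeminormedAddCommGroup F] [NormedSpace 𝕜 F]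
    (s : Finset ι) (c : ι → 𝕜) (v : ι → F) :
    ‖∑ i ∈ s, c i • v i‖ ^ 2 ≤ (∑ i ∈ s, ‖c i‖ ^ 2) * ∑ i ∈ s, ‖v i‖ ^ 2 :=
  calc ‖∑ i ∈ s, c i • v i‖ ^ 2 ≤ (∑ i ∈ s, ‖c i‖ * ‖v i‖) ^ 2 := by
        gcongr
        exact norm_sum_le_of_le s fun i _ => norm_smul_le (c i) (v i)
    _ ≤ _ := sum_mul_sq_le_sq_mul_sq s _ _

variable [Fintype ι] (b : OrthonormalBasis ι 𝕜 E)

/-- The subspace spanned by the basis vectors `b i` with `i ∈ S`; projecting to its orthogonal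
complement sets the coordinates in `S` to zero. -/
def coordSubspace (S : Finset ι) : Submodule 𝕜 E := Submodule.span 𝕜 (b '' S)

lemma mem_coordSubspace {S : Finset ι} {i : ι} (hi : i ∈ S) : b i ∈ coordSubspace b S :=
  Submodule.subset_span ⟨i, hi, rfl⟩

lemma mem_orthogonal_coordSubspace {S : Finset ι} {i : ι} (hi : i ∉ S) :
    b i ∈ (coordSubspace b S)ᗮ := by
  have hortho : Submodule.span 𝕜 {b i} ⟂ coordSubspace b S := by
    rw [coordSubspace, Submodule.isOrtho_span]
    rintro _ rfl _ ⟨j, hj, rfl⟩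
    exact b.orthonormal.2 fun hij => hi (hij ▸ hj)
  exact hortho (Submodule.mem_span_singleton_self _)

lemma coordSubspace_mono : Monotone (coordSubspace b) := fun _ _ h =>
  Submodule.span_mono (Set.image_mono (coe_subset.2 h))

lemma finrank_coordSubspace_le (S : Finset ι) : finrank 𝕜 (coordSubspace b S) ≤ #S := by
  classical
  rw [coordSubspace, ← coe_image]
  exact (finrank_span_finset_le_card _).trans card_image_le

variable [FiniteDimensional 𝕜 E]

lemma sum_sq_norm_starProjection_eq_finrank (U : Submodule 𝕜 E) :
    ∑ i, ‖U.starProjection (b i)‖ ^ 2 = finrank 𝕜 U := by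
  have hproj : LinearMap.IsProj U (U.starProjection : E →ₗ[𝕜] E) :=
    ⟨U.starProjection_apply_mem, fun _ => U.starProjection_eq_self_iff.2⟩
  have htrace := (LinearMap.trace_eq_sum_inner (U.starProjection : E →ₗ[𝕜] E) b).symm.trans
    hproj.trace
  have hre := congrArg RCLike.re htrace
  rw [map_sum, RCLike.natCast_re] at hre
  rw [← hre]
  refine sum_congr rfl fun i _ => ?_
  rw [ContinuousLinearMap.coe_coe, ← U.inner_starProjection_left_eq_right,
    U.re_inner_starProjection_eq_normSq, U.starProjection_apply, Submodule.coe_norm]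

variable [DecidableEq ι]

lemma repr_starProjection_orthogonal_coordSubspace (S : Finset ι) (x : E) (i : ι) :
    b.repr ((coordSubspace b S)ᗮ.starProjection x) i = if i ∈ S then 0 else b.repr x i := by
  rw [b.repr_apply_apply, b.repr_apply_apply]
  split_ifs with hi
  · exact (Submodule.mem_orthogonal _ _).1 (Submodule.starProjection_apply_mem _ x) _
      (mem_coordSubspace b hi)
  · rw [← Submodule.inner_starProjection_left_eq_right,
      Submodule.starProjection_eq_self_iff.2 (mem_orthogonal_coordSubspace b hi)]

lemma sq_norm_starProjection_orthogonal_coordSubspace (S : Finset ι) (x : E) :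
    ‖(coordSubspace b S)ᗮ.starProjection x‖ ^ 2 = ∑ i ∈ Sᶜ, ‖b.repr x i‖ ^ 2 := by
  rw [← b.repr.norm_map, EuclideanSpace.norm_sq_eq, ← sum_add_sum_compl S]
  simp only [repr_starProjection_orthogonal_coordSubspace]
  rw [sum_eq_zero fun i hi => by simp [hi], zero_add]
  exact sum_congr rfl fun i hi => by rw [if_neg (mem_compl.1 hi)]

end Projection

section Spectral

open Finset

variable {𝕜 E κ : Type*} [RCLike 𝕜] [NormedAddCommGroup E] [InnerProductSpace 𝕜 E] [Fintype κ]
  (u : OrthonormalBasis κ 𝕜 E) {A : E →ₗ[𝕜] E} {a : κ → ℝ}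

lemma re_inner_map_self_eq_sum (hA : ∀ k, A (u k) = (a k : 𝕜) • u k) (x : E) :
    RCLike.re (inner 𝕜 x (A x)) = ∑ k, a k * ‖u.repr x k‖ ^ 2 := by
  have hAx : A x = ∑ k, u.repr x k • (a k : 𝕜) • u k := by
    conv_lhs => rw [← u.sum_repr x]
    simp only [map_sum, map_smul, hA]
  rw [hAx, inner_sum, map_sum]
  refine sum_congr rfl fun k _ => ?_
  rw [inner_smul_right, inner_smul_right, ← inner_conj_symm, ← u.repr_apply_apply,
    mul_left_comm, RCLike.mul_conj, RCLike.re_ofReal_mul, ← RCLike.ofReal_pow, RCLike.ofReal_re]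

variable [FiniteDimensional 𝕜 E]

lemma mul_sq_norm_starProjection_orthogonal_le_re_inner
    (hA : ∀ k, A (u k) = (a k : 𝕜) • u k) (ha : ∀ k, 0 ≤ a k) {J : Finset κ} {m : ℝ}
    (hm : ∀ k ∉ J, m ≤ a k) (x : E) :
    m * ‖(coordSubspace u J)ᗮ.starProjection x‖ ^ 2 ≤ RCLike.re (inner 𝕜 x (A x)) := by
  classical
  rw [sq_norm_starProjection_orthogonal_coordSubspace, re_inner_map_self_eq_sum u hA, mul_sum]
  calc ∑ k ∈ Jᶜ, m * ‖u.repr x k‖ ^ 2 ≤ ∑ k ∈ Jᶜ, a k * ‖u.repr x k‖ ^ 2 := by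
        gcongr with k hk
        exact hm k (mem_compl.1 hk)
    _ ≤ ∑ k, a k * ‖u.repr x k‖ ^ 2 :=
        sum_le_univ_sum_of_nonneg fun k => mul_nonneg (ha k) (sq_nonneg _)

end Spectral

section Chain

open Finset

lemma exists_le_card_inter_succ_subset {α : Type*} [DecidableEq α] {S : ℕ → Finset α}
    (hS : Monotone S) (T : Finset α) : ∃ j ≤ #T, T ∩ S (j + 1) ⊆ S j := by
  by_contra! hgrow
  have hcard : ∀ j ≤ #T + 1, j ≤ #(T ∩ S j) := by
    intro j
    induction j with
    | zero => simp
    | succ j ih =>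
      intro hj
      have hssubset : T ∩ S j ⊂ T ∩ S (j + 1) :=
        ⟨inter_subset_inter_left (hS j.le_succ), fun h =>
          hgrow j (by lia) (h.trans inter_subset_right)⟩
      exact (ih (by lia)).trans_lt (card_lt_card hssubset)
  exact (hcard _ le_rfl).not_gt (Nat.lt_succ_of_le (card_le_card inter_subset_left))

end Chain

section Peeling

open Finset Module

variable {𝕜 E ι : Type*} [RCLike 𝕜] [NormedAddCommGroup E] [InnerProductSpace 𝕜 E]
  [FiniteDimensional 𝕜 E] [Fintype ι] (b : OrthonormalBasis ι 𝕜 E) {θ : ℝ}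
  (U V : Submodule 𝕜 E)

/-- The indices `i` whose leverage score `‖P_U (b i)‖²` with respect to the subspace `U` is at least
`θ`. These are the indices selected by one step of peeling. -/
def highLeverage (θ : ℝ) (U : Submodule 𝕜 E) : Finset ι :=
  {i | θ ≤ ‖U.starProjection (b i)‖ ^ 2}

lemma mem_highLeverage {i : ι} : i ∈ highLeverage b θ U ↔ θ ≤ ‖U.starProjection (b i)‖ ^ 2 := by
  simp [highLeverage]

lemma mul_card_highLeverage_le : θ * #(highLeverage b θ U) ≤ finrank 𝕜 U := by
  rw [← sum_sq_norm_starProjection_eq_finrank b U, mul_comm, ← nsmul_eq_mul]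
  exact (card_nsmul_le_sum _ _ _ fun i hi => (mem_highLeverage b U).1 hi).trans
    (sum_le_univ_sum_of_nonneg fun i => sq_nonneg _)

lemma subset_highLeverage_sup_coordSubspace (hθ : θ ≤ 1) (S : Finset ι) :
    S ⊆ highLeverage b θ (V ⊔ coordSubspace b S) := by
  intro i hi
  have hbi : b i ∈ V ⊔ coordSubspace b S := Submodule.mem_sup_right (mem_coordSubspace b hi)
  simpa [mem_highLeverage, Submodule.starProjection_eq_self_iff.2 hbi] using hθ

/-- The sets obtained by iterative peeling: starting from `∅`, replace `S` by the indices of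
leverage at least `θ` with respect to `V + span (b '' S)`. They provide the set `S` of `stmt5`. -/
def peel (θ : ℝ) (V : Submodule 𝕜 E) : ℕ → Finset ι
  | 0 => ∅
  | j + 1 => highLeverage b θ (V ⊔ coordSubspace b (peel θ V j))

lemma peel_mono (hθ : θ ≤ 1) : Monotone (peel b θ V) :=
  monotone_nat_of_le_succ fun _ => subset_highLeverage_sup_coordSubspace b V hθ _

lemma finrank_add_card_peel_le (hθ : 0 < θ) (j : ℕ) :
    (finrank 𝕜 V + #(peel b θ V j) : ℝ) ≤ (1 + θ⁻¹) ^ j * finrank 𝕜 V := by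
  induction j with
  | zero => simp [peel]
  | succ j ih =>
    have hfinrank : (finrank 𝕜 ↥(V ⊔ coordSubspace b (peel b θ V j)) : ℝ) ≤
        finrank 𝕜 V + #(peel b θ V j) := by
      exact_mod_cast (Submodule.finrank_add_le_finrank_add_finrank _ _).trans
        (Nat.add_le_add_left (finrank_coordSubspace_le b _) _)
    have hcard : (#(peel b θ V (j + 1)) : ℝ) ≤ θ⁻¹ * (finrank 𝕜 V + #(peel b θ V j)) :=
      (le_inv_mul_iff₀ hθ).2 ((mul_card_highLeverage_le b _).trans hfinrank)
    calc (finrank 𝕜 V + #(peel b θ V (j + 1)) : ℝ)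
        ≤ (1 + θ⁻¹) * (finrank 𝕜 V + #(peel b θ V j)) := by
          linarith [(#(peel b θ V j)).cast_nonneg (α := ℝ)]
      _ ≤ (1 + θ⁻¹) * ((1 + θ⁻¹) ^ j * finrank 𝕜 V) := by gcongr
      _ = (1 + θ⁻¹) ^ (j + 1) * finrank 𝕜 V := by ring

lemma sq_norm_starProjection_le_card_mul {B : Finset ι} {y : E}
    (hy : ∀ i ∉ B, b.repr y i = 0) (hB : ∀ i ∈ B, ‖U.starProjection (b i)‖ ^ 2 ≤ θ) :
    ‖U.starProjection y‖ ^ 2 ≤ #B * θ * ‖y‖ ^ 2 := by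
  have hyB : ∑ i ∈ B, b.repr y i • b i = y :=
    (sum_subset B.subset_univ fun i _ hi => by rw [hy i hi, zero_smul]).trans (b.sum_repr y)
  have hnorm : ∑ i ∈ B, ‖b.repr y i‖ ^ 2 ≤ ‖y‖ ^ 2 := by
    rw [← b.repr.norm_map y, EuclideanSpace.norm_sq_eq]
    exact sum_le_univ_sum_of_nonneg fun i => sq_nonneg _
  have hleverage : ∑ i ∈ B, ‖U.starProjection (b i)‖ ^ 2 ≤ #B * θ := by
    simpa only [nsmul_eq_mul] using sum_le_card_nsmul B _ θ hB
  calc ‖U.starProjection y‖ ^ 2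
      = ‖∑ i ∈ B, b.repr y i • U.starProjection (b i)‖ ^ 2 := by
        simp only [← map_smul, ← map_sum, hyB]
    _ ≤ (∑ i ∈ B, ‖b.repr y i‖ ^ 2) * ∑ i ∈ B, ‖U.starProjection (b i)‖ ^ 2 :=
        sq_norm_sum_smul_le B _ _
    _ ≤ ‖y‖ ^ 2 * (#B * θ) := by gcongr
    _ = #B * θ * ‖y‖ ^ 2 := mul_comm _ _

lemma mul_sq_norm_starProjection_orthogonal_coordSubspace_le [DecidableEq ι] (hθ : 0 ≤ θ)
    {S T : Finset ι} {x : E} (hx : ∀ i ∉ T, b.repr x i = 0)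
    (hTS : T ∩ highLeverage b θ (V ⊔ coordSubspace b S) ⊆ S) :
    (1 - #T * θ) * ‖(coordSubspace b S)ᗮ.starProjection x‖ ^ 2 ≤ ‖Vᗮ.starProjection x‖ ^ 2 := by
  set U := V ⊔ coordSubspace b S
  set y := (coordSubspace b S)ᗮ.starProjection x
  have hy : ∀ i ∉ T \ S, b.repr y i = 0 := by
    intro i hi
    rw [repr_starProjection_orthogonal_coordSubspace]
    split_ifs with hiS
    · rfl
    · exact hx i fun hiT => hi (mem_sdiff.2 ⟨hiT, hiS⟩)
  have hlow : ∀ i ∈ T \ S, ‖U.starProjection (b i)‖ ^ 2 ≤ θ := by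
    intro i hi
    obtain ⟨hiT, hiS⟩ := mem_sdiff.1 hi
    exact le_of_not_ge fun h => hiS (hTS (mem_inter.2 ⟨hiT, (mem_highLeverage b U).2 h⟩))
  have hproj : ‖U.starProjection y‖ ^ 2 ≤ #T * θ * ‖y‖ ^ 2 :=
    (sq_norm_starProjection_le_card_mul b U hy hlow).trans (by gcongr; exact sdiff_subset)
  have hyx : Uᗮ.starProjection y = Uᗮ.starProjection x :=
    DFunLike.congr_fun (Submodule.starProjection_comp_starProjection_of_le
      (Submodule.orthogonal_le (le_sup_right : coordSubspace b S ≤ U))) x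
  have hUV : ‖Uᗮ.starProjection x‖ ≤ ‖Vᗮ.starProjection x‖ :=
    norm_starProjection_le_of_le (Submodule.orthogonal_le le_sup_left) x
  calc (1 - #T * θ) * ‖y‖ ^ 2 ≤ ‖y‖ ^ 2 - ‖U.starProjection y‖ ^ 2 := by linarith
    _ = ‖Uᗮ.starProjection x‖ ^ 2 := by
        rw [Submodule.norm_sq_eq_add_norm_sq_starProjection y U, hyx, add_sub_cancel_left]
    _ ≤ ‖Vᗮ.starProjection x‖ ^ 2 := by gcongr

lemma mul_sq_norm_starProjection_orthogonal_peel_le (hθ₀ : 0 ≤ θ) (hθ₁ : θ ≤ 1) {T : Finset ι}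
    {t : ℕ} (hTt : #T ≤ t) (hTθ : #T * θ ≤ 1) {x : E} (hx : ∀ i ∉ T, b.repr x i = 0) :
    (1 - #T * θ) * ‖(coordSubspace b (peel b θ V t))ᗮ.starProjection x‖ ^ 2 ≤
      ‖Vᗮ.starProjection x‖ ^ 2 := by
  classical
  obtain ⟨j, hjT, hj⟩ := exists_le_card_inter_succ_subset (peel_mono b V hθ₁) T
  calc (1 - #T * θ) * ‖(coordSubspace b (peel b θ V t))ᗮ.starProjection x‖ ^ 2
      ≤ (1 - #T * θ) * ‖(coordSubspace b (peel b θ V j))ᗮ.starProjection x‖ ^ 2 := by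
        gcongr
        exact norm_starProjection_le_of_le (Submodule.orthogonal_le
          (coordSubspace_mono b (peel_mono b V hθ₁ (hjT.trans hTt)))) x
    _ ≤ ‖Vᗮ.starProjection x‖ ^ 2 :=
        mul_sq_norm_starProjection_orthogonal_coordSubspace_le b V hθ₀ hx hj

end Peeling

section Main

open Finset Module

variable {𝕜 E ι κ : Type*} [RCLike 𝕜] [NormedAddCommGroup E] [InnerProductSpace 𝕜 E]
  [FiniteDimensional 𝕜 E] [Fintype ι] [DecidableEq ι] [Fintype κ]

lemma exists_finset_card_le_sum_compl_sq_norm_le (b : OrthonormalBasis ι 𝕜 E)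
    (V : Submodule 𝕜 E) (t : ℕ) :
    ∃ S : Finset ι, #S ≤ (2 * t + 2) ^ t * finrank 𝕜 V ∧
      ∀ x, {i | b.repr x i ≠ 0}.ncard ≤ t →
        ∑ i ∈ Sᶜ, ‖b.repr x i‖ ^ 2 ≤ 2 * ‖Vᗮ.starProjection x‖ ^ 2 := by
  set θ : ℝ := (2 * t + 1)⁻¹
  have hθ₀ : 0 < θ := by positivity
  have hθ : (2 * t + 1) * θ = 1 := mul_inv_cancel₀ (by positivity)
  have hθ₁ : θ ≤ 1 := inv_le_one_of_one_le₀ (by linarith [t.cast_nonneg (α := ℝ)])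
  refine ⟨peel b θ V t, ?_, fun x hx => ?_⟩
  · have hcard := finrank_add_card_peel_le b V hθ₀ t
    rw [inv_inv, show (1 + (2 * t + 1) : ℝ) = 2 * t + 2 by ring] at hcard
    exact (Nat.le_add_left _ _).trans (by exact_mod_cast hcard)
  · set T : Finset ι := (Set.toFinite {i | b.repr x i ≠ 0}).toFinset
    have hTt : #T ≤ t := by rwa [← Set.ncard_eq_toFinset_card]
    have hTθ : #T * θ ≤ 1 / 2 := by
      have hTtθ : #T * θ ≤ t * θ := by gcongr
      linarith
    have hpeel := mul_sq_norm_starProjection_orthogonal_peel_le b V hθ₀.le hθ₁ hTt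
      (by linarith) (x := x) fun i hi => by simpa [T] using hi
    rw [sq_norm_starProjection_orthogonal_coordSubspace] at hpeel
    nlinarith [sum_nonneg fun i (_ : i ∈ (peel b θ V t)ᶜ) => sq_nonneg ‖b.repr x i‖]

theorem stmt5_general (b : OrthonormalBasis ι 𝕜 E) (u : OrthonormalBasis κ 𝕜 E) {A : E →ₗ[𝕜] E}
    {a : κ → ℝ} (hA : ∀ k, A (u k) = (a k : 𝕜) • u k) (ha : ∀ k, 0 ≤ a k) (t : ℕ) {J : Finset κ}
    {m : ℝ} (hm₀ : 0 ≤ m) (hm : ∀ k ∉ J, m ≤ a k) :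
    ∃ S : Finset ι, #S ≤ (2 * t + 2) ^ t * #J ∧
      ∀ x, {i | b.repr x i ≠ 0}.ncard ≤ t →
        m * ∑ i ∈ Sᶜ, ‖b.repr x i‖ ^ 2 ≤ 2 * RCLike.re (inner 𝕜 x (A x)) := by
  obtain ⟨S, hcard, hS⟩ := exists_finset_card_le_sum_compl_sq_norm_le b (coordSubspace u J) t
  refine ⟨S, hcard.trans (by gcongr; exact finrank_coordSubspace_le u J), fun x hx => ?_⟩
  calc m * ∑ i ∈ Sᶜ, ‖b.repr x i‖ ^ 2
      ≤ m * (2 * ‖(coordSubspace u J)ᗮ.starProjection x‖ ^ 2) := by gcongr; exact hS x hx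
    _ = 2 * (m * ‖(coordSubspace u J)ᗮ.starProjection x‖ ^ 2) := mul_left_comm _ _ _
    _ ≤ 2 * RCLike.re (inner 𝕜 x (A x)) := by
        gcongr
        exact mul_sq_norm_starProjection_orthogonal_le_re_inner u hA ha hm x

end Main

section Matrix

variable {n : ℕ}

lemma toEuclideanLin_eigenvectorBasis {𝕜 ι : Type*} [RCLike 𝕜] [Fintype ι] [DecidableEq ι]
    {A : Matrix ι ι 𝕜} (hA : A.IsHermitian) (i : ι) :
    A.toEuclideanLin (hA.eigenvectorBasis i) =
      (hA.eigenvalues i : 𝕜) • hA.eigenvectorBasis i := by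
  ext j
  simp [Matrix.toLpLin_apply, hA.mulVec_eigenvectorBasis, RCLike.real_smul_eq_coe_mul]

lemma innerSigma_self_eq_inner (A : Matrix (Fin n) (Fin n) ℝ) (v : Fin n → ℝ) :
    innerSigma A v v = inner ℝ (WithLp.toLp 2 v) (A.toEuclideanLin (WithLp.toLp 2 v)) := by
  simp [innerSigma, EuclideanSpace.inner_eq_star_dotProduct, dotProduct_comm]

lemma l2norm_restrictOut (S : Finset (Fin n)) (v : Fin n → ℝ) :
    l2norm (restrictOut S v) = √(∑ i ∈ Sᶜ, ‖v i‖ ^ 2) := by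
  simp [l2norm, restrictOut, Finset.sum_ite, Finset.compl_eq_univ_sdiff, Finset.filter_not]

lemma sqrt_mul_l2norm_restrictOut_le {A : Matrix (Fin n) (Fin n) ℝ} {S : Finset (Fin n)}
    {v : Fin n → ℝ} {m : ℝ} (h : m * ∑ i ∈ Sᶜ, ‖v i‖ ^ 2 ≤ 2 * innerSigma A v v) :
    √m * l2norm (restrictOut S v) ≤ √2 * normSigma A v := by
  rw [l2norm_restrictOut, normSigma, ← Real.sqrt_mul' m (by positivity),
    ← Real.sqrt_mul zero_le_two]
  exact Real.sqrt_le_sqrt h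

lemma exists_card_eq_forall_notMem_le {α κ : Type*} [Preorder α] {f : κ → α} (g : Fin n ≃ κ)
    (hf : Monotone (f ∘ g)) (d : Fin n) :
    ∃ J : Finset κ, J.card = d ∧ ∀ k ∉ J, f (g d) ≤ f k := by
  refine ⟨(Finset.Iio d).map g.toEmbedding, by simp, fun k hk => ?_⟩
  have hdk : d ≤ g.symm k := by simpa [Finset.mem_map_equiv] using hk
  simpa using hf hdk

lemma two_mul_add_two_pow_le {t : ℕ} (ht : 1 ≤ t) : (2 * t + 2) ^ t ≤ (7 * t) ^ (2 * t + 1) :=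
  (Nat.pow_le_pow_left (by lia) t).trans (Nat.pow_le_pow_right (by lia) (by lia))

end Matrix

/-- guarantee of iterative peeling. `lam` enumerates the eigenvalues of Σ
in nondecreasing order (so `lam ⟨d, _⟩` is `λ_{d+1}` in 1-indexed notation). -/
theorem stmt5 (n t d : ℕ) (ht : 1 ≤ t) (hd : d + 1 ≤ n)
    (A : Matrix (Fin n) (Fin n) ℝ) (hA : A.PosSemidef)
    (lam : Fin n → ℝ) (hmono : Monotone lam)
    (g : Fin n ≃ Fin n) (hg : lam = hA.1.eigenvalues ∘ g) :
    ∃ S : Finset (Fin n), S.card ≤ (7 * t) ^ (2 * t + 1) * d ∧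
      ∀ v : Fin n → ℝ, SparseVec t v →
        Real.sqrt (lam ⟨d, hd⟩) * l2norm (restrictOut S v) ≤ 3 * normSigma A v := by
  have hlam (i : Fin n) : lam i = hA.1.eigenvalues (g i) := congrFun hg i
  obtain ⟨J, hJ, hJlam⟩ := exists_card_eq_forall_notMem_le g (hg ▸ hmono) ⟨d, hd⟩
  obtain ⟨S, hcard, hS⟩ := stmt5_general (EuclideanSpace.basisFun (Fin n) ℝ)
    hA.1.eigenvectorBasis (toEuclideanLin_eigenvectorBasis hA.1) hA.eigenvalues_nonneg t
    (hA.eigenvalues_nonneg (g ⟨d, hd⟩)) hJlam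
  refine ⟨S, hcard.trans ?_, fun v hv => ?_⟩
  · rw [hJ]
    exact Nat.mul_le_mul_right d (two_mul_add_two_pow_le ht)
  · have hSv := hS (WithLp.toLp 2 v) hv
    rw [RCLike.re_to_real, ← innerSigma_self_eq_inner, ← hlam] at hSv
    refine (sqrt_mul_l2norm_restrictOut_le hSv).trans ?_
    exact mul_le_mul_of_nonneg_right (Real.sqrt_le_iff.2 (by norm_num)) (Real.sqrt_nonneg _)
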